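/- Let C be a triangulated category and B a weakly negative set of objects of C. Then for any integers m, n and any object M ∈ B_{[m,n]}, there exists a distinguished triangle X → M → Y → X[1] with X ∈ B_{[m,0]} and Y ∈ B_{[1,n]}. -/

import Mathlib

open CategoryTheory Limits Pretriangulated ZeroObject

universe v u v' u'

namespace CategoryTheory.Triangulated

/-- Mathlib's former `CategoryTheory.Triangulated.Subcategory` (since removed), with its
old meaning. -/
structure Subcategory (C : Type u) [Category.{v} C] [HasZeroObject C] [HasShift C ℤ]
    [Preadditive C] [∀ n : ℤ, (shiftFunctor C n).Additive] [Pretriangulated C] where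
  P : C → Prop
  zero' : ∃ (Z : C) (_ : IsZero Z), P Z
  shift (X : C) (n : ℤ) : P X → P (X⟦n⟧)
  ext₂' (T : Triangle C) (_ : T ∈ distTriang C) :
    P T.obj₁ → P T.obj₃ → ObjectProperty.isoClosure P T.obj₂

/-- Mathlib's former `CategoryTheory.Triangulated.Subcategory.mk'` (since removed). -/
def Subcategory.mk' {C : Type u} [Category.{v} C] [HasZeroObject C] [HasShift C ℤ]
    [Preadditive C] [∀ n : ℤ, (shiftFunctor C n).Additive] [Pretriangulated C]
    (P : C → Prop) (zero : P 0) (shift : ∀ (X : C) (n : ℤ), P X → P (X⟦n⟧))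
    (ext₂ : ∀ (T : Triangle C) (_ : T ∈ distTriang C), P T.obj₁ → P T.obj₃ → P T.obj₂) :
    Subcategory C where
  P := P
  zero' := ⟨0, isZero_zero _, zero⟩
  shift := shift
  ext₂' T hT h₁ h₃ := ObjectProperty.le_isoClosure P _ (ext₂ T hT h₁ h₃)

end CategoryTheory.Triangulated

section TriangulatedPrelude

variable {C : Type u} [Category.{v} C] [HasZeroObject C] [HasShift C ℤ] [Preadditive C]
  [∀ n : ℤ, (shiftFunctor C n).Additive] [Pretriangulated C]

/-- The objects of the smallest strict full triangulated subcategory of `C`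
containing the set of objects `B`. -/
inductive genSub (B : Set C) : C → Prop
  | of (X : C) (hX : X ∈ B) : genSub B X
  | zero (X : C) (hX : IsZero X) : genSub B X
  | shift (X : C) (n : ℤ) (hX : genSub B X) : genSub B (X⟦n⟧)
  | ext₂ (T : Triangle C) (hT : T ∈ distTriang C) (h₁ : genSub B T.obj₁)
      (h₃ : genSub B T.obj₃) : genSub B T.obj₂

/-- The triangulated subcategory of `C` generated by `B`. -/
def genSubcat (B : Set C) : Triangulated.Subcategory C :=
  Triangulated.Subcategory.mk' (genSub B)
    (genSub.zero _ (isZero_zero _))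
    (fun X n h => genSub.shift X n h)
    (fun T hT h₁ h₃ => genSub.ext₂ T hT h₁ h₃)

/-- The extension-closure of a class of objects `E`: the smallest class containing `E`
and `0` and such that for any distinguished triangle `X ⟶ Y ⟶ Z` with `X, Z` in the
class, `Y` is also in the class. -/
inductive extClosure (E : Set C) : C → Prop
  | of (X : C) (hX : X ∈ E) : extClosure E X
  | zero (X : C) (hX : IsZero X) : extClosure E X
  | ext₂ (T : Triangle C) (hT : T ∈ distTriang C) (h₁ : extClosure E T.obj₁)
      (h₃ : extClosure E T.obj₃) : extClosure E T.obj₂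

/-- `D_{[i,j]}`: the extension-closure of `∪_{i ≤ l ≤ j} D[l]`. -/
def shiftClosure (D : Set C) (i j : ℤ) : Set C :=
  extClosure {X | ∃ (Y : C) (l : ℤ), i ≤ l ∧ l ≤ j ∧ Y ∈ D ∧ X = Y⟦l⟧}

/-- `D_{≥ i} = ∪_{k ≥ i} D_{[i,k]}`. -/
def shiftClosureGE (D : Set C) (i : ℤ) : Set C := {X | ∃ k, i ≤ k ∧ X ∈ shiftClosure D i k}

/-- `D_{≤ j} = ∪_{k ≤ j} D_{[k,j]}`. -/
def shiftClosureLE (D : Set C) (j : ℤ) : Set C := {X | ∃ k, k ≤ j ∧ X ∈ shiftClosure D k j}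

/-- A set of objects `D` is weakly negative if `0 ∈ D` and `Hom(X, Y[i]) = 0`
for all `X, Y ∈ D` and all `i ≥ 2`. -/
def WeaklyNegative (D : Set C) : Prop :=
  (0 : C) ∈ D ∧ ∀ X ∈ D, ∀ Y ∈ D, ∀ i : ℤ, 2 ≤ i → ∀ f : X ⟶ (Y⟦i⟧), f = 0

end TriangulatedPrelude

/-!
Since `B` is weakly negative, there are no nonzero maps from `P = B_{[m,k]}` to `Q[1]`, where
`Q = B_{[k+1,n]}`. Write `P * Q` for the class of middle terms of distinguished triangles
`X ⟶ M ⟶ Y ⟶ X⟦1⟧` with `X` in `P` and `Y` in `Q`; by the octahedral axiom this product is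
associative. A triangle exhibiting an object of `Q * P` has zero connecting map, hence splits, so
`Q * P ⊆ P * Q` and `(P * Q) * (P * Q) ⊆ P * P * Q * Q ⊆ P * Q`. Thus `P * Q` is extension-closed,
and it contains every `X⟦l⟧` with `X ∈ B` and `m ≤ l ≤ n`.
-/

open ObjectProperty

section ExtensionClosure

variable {C : Type u} [Category.{v} C] [HasZeroObject C] [HasShift C ℤ] [Preadditive C]
  [∀ n : ℤ, (shiftFunctor C n).Additive] [Pretriangulated C]

instance (P : ObjectProperty C) [P.ContainsZero] [P.IsClosedUnderIsomorphisms] (a : ℤ) :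
    (P.shift a).ContainsZero :=
  inferInstanceAs (P.inverseImage (shiftFunctor C a)).ContainsZero

instance (P : ObjectProperty C) [P.IsTriangulatedClosed₂] [P.IsClosedUnderIsomorphisms] (a : ℤ) :
    (P.shift a).IsTriangulatedClosed₂ :=
  .mk' fun T hT h₁ h₃ ↦
    P.ext_of_isTriangulatedClosed₂ _ (Triangle.shift_distinguished T hT a) h₁ h₃

instance (P Q : ObjectProperty C) [P.ContainsZero] [Q.ContainsZero] :
    (extensionProduct P Q).ContainsZero where
  exists_zero :=
    let ⟨Z, hZ, hPZ⟩ := P.exists_prop_of_containsZero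
    ⟨Z, hZ, le_extensionProduct_left Q _ hPZ⟩

lemma extensionProduct_comm_le {P Q : ObjectProperty C}
    (h : Q ≤ P.rightOrthogonal.shift (1 : ℤ)) :
    extensionProduct Q P ≤ extensionProduct P Q := by
  rintro M ⟨Y, X, a, b, c, hT, hY, hX⟩
  obtain ⟨e, -, -⟩ := exists_iso_binaryBiproduct_of_distTriang _ hT (h Y hY c hX)
  have hXY : extensionProduct P Q (X ⊞ Y) :=
    ⟨_, _, _, _, _, binaryBiproductTriangle_distinguished X Y, hX, hY⟩
  exact prop_of_iso _ (biprod.braiding X Y ≪≫ e.symm) hXY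

lemma extensionProduct_isTriangulatedClosed₂ [IsTriangulated C] {P Q : ObjectProperty C}
    [P.IsTriangulatedClosed₂] [P.IsClosedUnderIsomorphisms]
    [Q.IsTriangulatedClosed₂] [Q.IsClosedUnderIsomorphisms]
    (h : Q ≤ P.rightOrthogonal.shift (1 : ℤ)) :
    (extensionProduct P Q).IsTriangulatedClosed₂ := by
  have hP : extensionProduct P P ≤ P := extensionProduct_le_of_isTriangulatedClosed₂ le_rfl le_rfl
  have hQ : extensionProduct Q Q ≤ Q := extensionProduct_le_of_isTriangulatedClosed₂ le_rfl le_rfl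
  have hPQ : extensionProduct (extensionProduct P Q) (extensionProduct P Q) ≤
      extensionProduct P Q := calc
    _ = extensionProduct P (extensionProduct (extensionProduct Q P) Q) := by
      simp only [extensionProduct_assoc]
    _ ≤ extensionProduct P (extensionProduct (extensionProduct P Q) Q) :=
      monotone_extensionProduct_right _
        (monotone_extensionProduct_left _ (extensionProduct_comm_le h))
    _ = extensionProduct (extensionProduct P P) (extensionProduct Q Q) := by
      simp only [extensionProduct_assoc]
    _ ≤ extensionProduct P (extensionProduct Q Q) := monotone_extensionProduct_left _ hP
    _ ≤ extensionProduct P Q := monotone_extensionProduct_right _ hQ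
  exact .mk' fun T hT h₁ h₃ ↦ hPQ _ ⟨_, _, _, _, _, hT, h₁, h₃⟩

namespace extClosure

variable {E F : Set C}

instance : ObjectProperty.ContainsZero (extClosure E) where
  exists_zero := ⟨0, isZero_zero C, .zero _ (isZero_zero C)⟩

instance : ObjectProperty.IsClosedUnderIsomorphisms (extClosure E) where
  of_iso e hX := by
    obtain ⟨Z, g, h, hT⟩ := distinguished_cocone_triangle e.hom
    have hZ : IsZero Z := (Triangle.isZero₃_iff_isIso₁ _ hT).2 (inferInstanceAs (IsIso e.hom))
    exact .ext₂ _ hT hX (.zero Z hZ)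

instance : ObjectProperty.IsTriangulatedClosed₂ (extClosure E) := .mk' .ext₂

lemma le_of_forall_mem {P : ObjectProperty C} [P.ContainsZero] [P.IsClosedUnderIsomorphisms]
    [P.IsTriangulatedClosed₂] (hE : ∀ X ∈ E, P X) : extClosure E ≤ P := by
  intro X hX
  induction hX with
  | of X hX => exact hE X hX
  | zero X hX => exact P.prop_of_isZero hX
  | ext₂ T hT _ _ h₁ h₃ => exact P.ext_of_isTriangulatedClosed₂ T hT h₁ h₃

lemma mono (h : E ⊆ F) : extClosure E ≤ extClosure F :=
  le_of_forall_mem fun X hX ↦ .of X (h hX)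

lemma le_shift_rightOrthogonal {a : ℤ} (h : ∀ X ∈ E, ∀ Y ∈ F, ∀ f : X ⟶ Y⟦a⟧, f = 0) :
    extClosure F ≤ (rightOrthogonal (extClosure E)).shift a := by
  refine le_of_forall_mem fun Y hY X f hX ↦ ?_
  have hE : extClosure E ≤ (ObjectProperty.singleton (Y⟦a⟧)).leftOrthogonal :=
    le_of_forall_mem fun X' hX' _ g hZ ↦ by
      obtain rfl := (singleton_iff _ _).1 hZ
      exact h X' hX' Y hY g
  exact hE X hX f ((singleton_iff _ _).2 rfl)

lemma union_le_extensionProduct [IsTriangulated C]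
    (h : ∀ X ∈ E, ∀ Y ∈ F, ∀ f : X ⟶ Y⟦(1 : ℤ)⟧, f = 0) :
    extClosure (E ∪ F) ≤ extensionProduct (extClosure E) (extClosure F) := by
  have := extensionProduct_isTriangulatedClosed₂ (le_shift_rightOrthogonal h)
  refine le_of_forall_mem ?_
  rintro X (hX | hX)
  · exact le_extensionProduct_left _ _ (.of X hX)
  · exact le_extensionProduct_right _ _ (.of X hX)

end extClosure

end ExtensionClosure

section WeaklyNegative

variable {C : Type u} [Category.{v} C] [HasShift C ℤ]

/-- The union of the shifts `D[l]` for `i ≤ l ≤ j`, whose extension-closure is `D_{[i,j]}`. -/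
def shiftUnion (D : Set C) (i j : ℤ) : Set C :=
  {X | ∃ (Y : C) (l : ℤ), i ≤ l ∧ l ≤ j ∧ Y ∈ D ∧ X = Y⟦l⟧}

lemma shiftUnion_subset_union (D : Set C) (i k j : ℤ) :
    shiftUnion D i j ⊆ shiftUnion D i k ∪ shiftUnion D (k + 1) j := by
  rintro _ ⟨Y, l, hil, hlj, hY, rfl⟩
  rcases le_or_gt l k with hlk | hkl
  · exact .inl ⟨Y, l, hil, hlk, hY, rfl⟩
  · exact .inr ⟨Y, l, hkl, hlj, hY, rfl⟩

namespace WeaklyNegative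

variable [HasZeroObject C] [Preadditive C] [∀ n : ℤ, (shiftFunctor C n).Additive]
  {B : Set C}

lemma hom_shift_shift_eq_zero (hB : WeaklyNegative B) {X Y : C} (hX : X ∈ B) (hY : Y ∈ B)
    {k l : ℤ} (hkl : k + 2 ≤ l) (f : X⟦k⟧ ⟶ Y⟦l⟧) : f = 0 := by
  let e : Y⟦l⟧ ≅ Y⟦l - k⟧⟦k⟧ := (shiftFunctorAdd' C (l - k) k l (by lia)).app Y
  obtain ⟨g, hg⟩ := (shiftFunctor C k).map_surjective (f ≫ e.hom)
  have hg₀ : g = 0 := hB.2 X hX Y hY (l - k) (by lia) g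
  rw [← cancel_mono e.hom, zero_comp, ← hg, hg₀, Functor.map_zero]

lemma hom_shiftUnion_eq_zero (hB : WeaklyNegative B) {i k j : ℤ} {X Y : C}
    (hX : X ∈ shiftUnion B i k) (hY : Y ∈ shiftUnion B (k + 1) j) (f : X ⟶ Y⟦(1 : ℤ)⟧) :
    f = 0 := by
  obtain ⟨X', p, -, hp, hX', rfl⟩ := hX
  obtain ⟨Y', q, hq, -, hY', rfl⟩ := hY
  rw [← cancel_mono ((shiftFunctorAdd' C q 1 (q + 1) rfl).inv.app Y'), zero_comp]
  exact hB.hom_shift_shift_eq_zero hX' hY' (by lia) _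

end WeaklyNegative

end WeaklyNegative

theorem statement4_general {C : Type u} [Category.{v} C] [HasZeroObject C] [HasShift C ℤ]
    [Preadditive C] [∀ n : ℤ, (shiftFunctor C n).Additive] [Pretriangulated C]
    [IsTriangulated C] (B : Set C) (hB : WeaklyNegative B) (m k n : ℤ) (M : C)
    (hM : M ∈ shiftClosure B m n) :
    ∃ (X Y : C) (a : X ⟶ M) (b : M ⟶ Y) (c : Y ⟶ X⟦(1 : ℤ)⟧),
      (Triangle.mk a b c ∈ distTriang C) ∧
        X ∈ shiftClosure B m k ∧ Y ∈ shiftClosure B (k + 1) n := by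
  have hM' : extClosure (shiftUnion B m k ∪ shiftUnion B (k + 1) n) M :=
    extClosure.mono (shiftUnion_subset_union B m k n) M hM
  exact extClosure.union_le_extensionProduct
    (fun _ hX _ hY f ↦ hB.hom_shiftUnion_eq_zero hX hY f) M hM'

/-- Proposition: weak weight decompositions exist for objects of `B_{[m,n]}`
when `B` is a weakly negative set of objects. -/
theorem statement4 {C : Type u} [Category.{v} C] [HasZeroObject C] [HasShift C ℤ]
    [Preadditive C] [∀ n : ℤ, (shiftFunctor C n).Additive] [Pretriangulated C]
    [IsTriangulated C] (B : Set C) (hB : WeaklyNegative B) (m n : ℤ) (M : C)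
    (hM : M ∈ shiftClosure B m n) :
    ∃ (X Y : C) (a : X ⟶ M) (b : M ⟶ Y) (c : Y ⟶ X⟦(1 : ℤ)⟧),
      (Triangle.mk a b c ∈ distTriang C) ∧ X ∈ shiftClosure B m 0 ∧ Y ∈ shiftClosure B 1 n := by
  simpa only [zero_add] using statement4_general B hB m 0 n M hM
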